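/- Descartes' rule of signs: Let P = ∑_{i=0}^{n} a_i x^i be a nonzero real polynomial, let V(P) be the number of sign variations in the coefficient sequence (a_0, a_1, ..., a_n) after deleting zero entries, and let m be the number of positive real roots of P counted with multiplicity. Then m ≤ V(P) and V(P) − m is even. -/

import Mathlib

/-- Number of sign variations of a list of reals whose zero entries have already been removed. -/
noncomputable def signVarAux : List ℝ → ℕ
  | x :: y :: t => (if x * y < 0 then 1 else 0) + signVarAux (y :: t)
  | _ => 0

/-- Number of sign variations of a list of reals (zero entries are deleted first). -/
noncomputable def signVar (l : List ℝ) : ℕ := signVarAux (l.filter (fun x => x ≠ 0))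

/-- Sign variation count of the coefficient sequence `(a₀, a₁, …, a_n)` of a polynomial. -/
noncomputable def polySignVar (P : Polynomial ℝ) : ℕ :=
  signVar ((List.range (P.natDegree + 1)).map fun i => P.coeff i)

open Polynomial

theorem signVarAux_append_pair (l : List ℝ) (a b : ℝ) :
    signVarAux (l ++ [a, b]) = signVarAux (l ++ [a]) + if a * b < 0 then 1 else 0 := by
  induction l with
  | nil => simp [signVarAux]
  | cons x l ih =>
    cases l with
    | nil => simp [signVarAux]
    | cons y l =>
      simp only [List.cons_append, signVarAux] at ih ⊢
      omega

theorem signVarAux_reverse (l : List ℝ) : signVarAux l.reverse = signVarAux l := by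
  induction l with
  | nil => rfl
  | cons x l ih =>
    cases l with
    | nil => rfl
    | cons y l =>
      simp only [List.reverse_cons, List.append_assoc, List.cons_append, List.nil_append] at ih ⊢
      rw [signVarAux_append_pair, ih, signVarAux, mul_comm y x, add_comm]

theorem sign_ne_sign_iff_mul_neg {a b : ℝ} (ha : a ≠ 0) (hb : b ≠ 0) :
    SignType.sign a ≠ SignType.sign b ↔ a * b < 0 := by
  rcases lt_or_gt_of_ne ha with h | h <;> rcases lt_or_gt_of_ne hb with h' | h' <;>
    simp [h, h', mul_neg_iff, sign_pos, sign_neg, h.not_gt, h'.not_gt]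

theorem signVarAux_eq_length_destutter (l : List ℝ) (hl : ∀ x ∈ l, x ≠ 0) :
    signVarAux l = ((l.map SignType.sign).destutter (· ≠ ·)).length - 1 := by
  induction l with
  | nil => rfl
  | cons a l ih =>
    cases l with
    | nil => simp [signVarAux]
    | cons b t =>
      have ha : a ≠ 0 := hl a (by simp)
      have hb : b ≠ 0 := hl b (by simp)
      have ih' := ih fun x hx => hl x (by simp [hx])
      have hpos : 0 < (((b :: t).map SignType.sign).destutter (· ≠ ·)).length :=
        List.length_pos_of_ne_nil (by
          rw [List.map_cons, List.destutter_cons']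
          exact List.destutter'_ne_nil _ _)
      rw [signVarAux, ih']
      simp only [List.map_cons] at hpos ⊢
      rw [List.destutter_cons_cons]
      by_cases h : a * b < 0
      · have h' := (sign_ne_sign_iff_mul_neg ha hb).2 h
        rw [if_pos h, if_pos h', List.length_cons]
        rw [List.destutter_cons'] at hpos ⊢
        omega
      · have h' := mt (sign_ne_sign_iff_mul_neg ha hb).1 h
        rw [if_neg h, if_neg h', zero_add, List.destutter_cons', not_not.1 h']

theorem polySignVar_eq_signVariations (P : ℝ[X]) (hP : P ≠ 0) :
    polySignVar P = P.signVariations := by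
  rw [polySignVar, signVar, ← signVarAux_reverse, ← List.filter_reverse,
    signVarAux_eq_length_destutter _ (by simp), signVariations, coeffList,
    withBotSucc_degree_eq_natDegree_add_one hP, List.filter_map, List.map_reverse]
  congr 4
  simp [Function.comp_def]

theorem even_signVarAux_iff (a : ℝ) (l : List ℝ) (hl : ∀ x ∈ a :: l, x ≠ 0) :
    Even (signVarAux (a :: l)) ↔ 0 < a * (a :: l).getLast (List.cons_ne_nil a l) := by
  induction l generalizing a with
  | nil =>
    have ha : a ≠ 0 := hl a (by simp)
    simp [signVarAux, ha]
  | cons b t ih =>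
    have ha : a ≠ 0 := hl a (by simp)
    have hb : b ≠ 0 := hl b (by simp)
    have ih' := ih b fun x hx => hl x (List.mem_cons_of_mem _ hx)
    rw [List.getLast_cons (List.cons_ne_nil b t), signVarAux, Nat.even_add, ih']
    have hc : (b :: t).getLast (List.cons_ne_nil b t) ≠ 0 :=
      hl _ (List.mem_cons_of_mem _ (List.getLast_mem _))
    generalize (b :: t).getLast (List.cons_ne_nil b t) = c at hc
    rcases lt_or_gt_of_ne ha with ha | ha <;> rcases lt_or_gt_of_ne hb with hb | hb <;>
      rcases lt_or_gt_of_ne hc with hc | hc <;>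
      simp [mul_neg_iff, mul_pos_iff, ha, hb, hc, ha.not_gt, hb.not_gt, hc.not_gt]

theorem even_polySignVar_iff (P : ℝ[X]) (hP : P ≠ 0) :
    Even (polySignVar P) ↔ 0 < P.trailingCoeff * P.leadingCoeff := by
  set k := P.natTrailingDegree with hk
  obtain ⟨m, hm⟩ := Nat.exists_eq_add_of_le P.natTrailingDegree_le_natDegree
  have htr : P.coeff k ≠ 0 := mt trailingCoeff_eq_zero.1 hP
  have hlead : P.coeff (k + m) ≠ 0 := by rw [hk, ← hm]; exact mt leadingCoeff_eq_zero.1 hP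
  have hlow : ((List.range k).map fun i => P.coeff i).filter (fun x => x ≠ 0) = [] := by
    rw [List.filter_eq_nil_iff]
    simp only [List.mem_map, List.mem_range, forall_exists_index, and_imp]
    rintro _ i hi rfl
    simp [coeff_eq_zero_of_lt_natTrailingDegree hi]
  obtain ⟨t, ht⟩ : ∃ t, ((List.range (P.natDegree + 1)).map fun i => P.coeff i).filter
      (fun x => x ≠ 0) = P.coeff k :: t := by
    rw [hm, ← hk, add_assoc, List.range_add, List.map_append, List.filter_append, hlow,
      List.range_succ_eq_map]
    simp [htr]
  have hlast : (P.coeff k :: t).getLast (List.cons_ne_nil _ _) = P.leadingCoeff := by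
    have h : (P.coeff k :: t).getLast? = some P.leadingCoeff := by
      rw [← ht, List.range_succ, List.map_append, List.filter_append]
      simp [hP]
    rw [List.getLast?_eq_some_getLast (List.cons_ne_nil _ _)] at h
    exact Option.some.inj h
  rw [polySignVar, signVar, ht, even_signVarAux_iff, hlast]
  · rfl
  · intro x hx
    rw [← ht] at hx
    simpa using (List.mem_filter.1 hx).2

theorem eval_zero_mul_leadingCoeff_pos (P : ℝ[X]) (h : ∀ x, 0 ≤ x → P.eval x ≠ 0) :
    0 < P.eval 0 * P.leadingCoeff := by
  wlog hl : 0 ≤ P.leadingCoeff generalizing P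
  · have := this (-P) (by simpa using h) (by simpa using (not_le.1 hl).le)
    simpa using this
  have hP : P ≠ 0 := by
    rintro rfl
    exact h 0 le_rfl (by simp)
  have hl' : 0 < P.leadingCoeff := lt_of_le_of_ne hl (leadingCoeff_ne_zero.2 hP).symm
  refine mul_pos ?_ hl'
  by_contra hneg
  obtain ⟨b, hb, hPb⟩ : ∃ b, 0 ≤ b ∧ 0 ≤ P.eval b := by
    by_cases hd : 0 < P.degree
    · have ht := P.tendsto_atTop_of_leadingCoeff_nonneg hd hl
      exact ((Filter.eventually_ge_atTop 0).and (ht.eventually_ge_atTop 0)).exists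
    · refine ⟨0, le_rfl, ?_⟩
      rw [eq_C_of_degree_le_zero (not_lt.1 hd)] at hl ⊢
      simpa using hl
  obtain ⟨c, hc, hPc⟩ := intermediate_value_Icc hb P.continuousOn ⟨not_lt.1 hneg, hPb⟩
  exact h c hc.1 hPc

theorem even_card_pos_roots_iff (P : ℝ[X]) (hP : P ≠ 0) :
    Even (P.roots.filter (fun x => 0 < x)).card ↔ 0 < P.trailingCoeff * P.leadingCoeff := by
  induction hd : P.natDegree generalizing P with
  | zero =>
    obtain ⟨c, rfl⟩ := natDegree_eq_zero.1 hd
    simpa [trailingCoeff] using hP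
  | succ d ih =>
    by_cases h : ∀ x, 0 ≤ x → P.eval x ≠ 0
    · have h0 : P.coeff 0 ≠ 0 := by simpa [coeff_zero_eq_eval_zero] using h 0 le_rfl
      have hroots : P.roots.filter (fun x => 0 < x) = 0 :=
        Multiset.filter_eq_nil.2 fun x hx hpos => h x hpos.le (mem_roots'.1 hx).2
      rw [hroots, trailingCoeff, natTrailingDegree_eq_zero.2 (.inr h0), coeff_zero_eq_eval_zero]
      simp [eval_zero_mul_leadingCoeff_pos P h]
    · push Not at h
      obtain ⟨η, hη, hroot⟩ := h
      obtain ⟨Q, rfl⟩ := dvd_iff_isRoot.2 hroot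
      have hQ : Q ≠ 0 := right_ne_zero_of_mul hP
      have hQd : Q.natDegree = d := by
        rw [natDegree_mul (X_sub_C_ne_zero η) hQ, natDegree_X_sub_C] at hd
        omega
      rw [roots_mul hP, roots_X_sub_C, Multiset.filter_add, Multiset.card_add, Nat.even_add,
        ih Q hQ hQd, trailingCoeff_mul, leadingCoeff_mul, leadingCoeff_X_sub_C, one_mul]
      rcases hη.eq_or_lt with rfl | hη
      · simp [trailingCoeff, Multiset.filter_singleton]
      · have ht : (X - C η).trailingCoeff = -η := by
          have h0 : (X - C η).coeff 0 ≠ 0 := by simp [hη.ne']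
          rw [trailingCoeff, natTrailingDegree_eq_zero.2 (.inr h0)]
          simp
        have ht' : Q.trailingCoeff ≠ 0 := mt trailingCoeff_eq_zero.1 hQ
        have hl' : Q.leadingCoeff ≠ 0 := mt leadingCoeff_eq_zero.1 hQ
        have hne : Q.trailingCoeff * Q.leadingCoeff ≠ 0 := mul_ne_zero ht' hl'
        rw [ht, mul_assoc, neg_mul, neg_pos, mul_neg_iff]
        simp [hη, hη.not_gt, Multiset.filter_singleton, hne.le_iff_lt]

/-- Descartes' rule of signs: the number `m` of positive real roots of a nonzero real
polynomial, counted with multiplicity, satisfies `m ≤ V(P)` and `V(P) − m` is even. -/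
theorem descartes_rule_of_signs (P : Polynomial ℝ) (hP : P ≠ 0) :
    (P.roots.filter (fun x => 0 < x)).card ≤ polySignVar P ∧
    Even (polySignVar P - (P.roots.filter (fun x => 0 < x)).card) := by
  have hle : (P.roots.filter (fun x => 0 < x)).card ≤ polySignVar P := by
    rw [polySignVar_eq_signVariations P hP, ← Multiset.countP_eq_card_filter]
    exact roots_countP_pos_le_signVariations P
  refine ⟨hle, ?_⟩
  rw [Nat.even_sub hle, even_polySignVar_iff P hP, even_card_pos_roots_iff P hP]
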